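/- Let n ≥ 3 and let f ∈ Aut(F_n). If there exist distinct indices i, j with the left multiplication L_{x_i x_j} contained in the normal closure N(f) of f in Aut(F_n), then N(f) = SAut(F_n) if det(f̄) = 1, and N(f) = Aut(F_n) if det(f̄) = −1. -/

import Mathlib

open Matrix

namespace NormalClosurePaper

/-- The automorphism group of the free group on `n` generators. -/
abbrev FrAut (n : ℕ) := MulAut (FreeGroup (Fin n))

/-- Exponent sum of the generator `x_i` in a word of the free group. -/
def expSum {n : ℕ} (i : Fin n) : FreeGroup (Fin n) →* Multiplicative ℤ :=
  FreeGroup.lift fun j => Multiplicative.ofAdd (if j = i then (1 : ℤ) else 0)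

/-- The abelianized matrix of an automorphism of the free group:
the `(i, j)` entry is the exponent sum of `x_i` in `f x_j`. -/
def mat {n : ℕ} (f : FrAut n) : Matrix (Fin n) (Fin n) ℤ :=
  Matrix.of fun i j => (expSum i (f (FreeGroup.of j))).toAdd

lemma expSum_apply {n : ℕ} (f : FrAut n) (i : Fin n) (w : FreeGroup (Fin n)) :
    (expSum i (f w)).toAdd = ∑ k, mat f i k * (expSum k w).toAdd := by
  induction w using FreeGroup.induction_on with
  | C1 => simp
  | of j =>
      have h : (expSum i (f (FreeGroup.of j))).toAdd = mat f i j := rfl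
      rw [h]
      simp [expSum, mul_ite, Finset.sum_ite_eq]
  | inv_of j ih =>
      simp only [_root_.map_inv, toAdd_inv, mul_neg, Finset.sum_neg_distrib, ih]
  | mul x y ihx ihy =>
      simp only [_root_.map_mul, toAdd_mul, mul_add, Finset.sum_add_distrib, ihx, ihy]

lemma mat_one {n : ℕ} : mat (1 : FrAut n) = 1 := by
  ext i j
  simp [mat, expSum, Matrix.one_apply, eq_comm]

lemma mat_mul {n : ℕ} (f g : FrAut n) : mat (f * g) = mat f * mat g := by
  ext i j
  rw [Matrix.mul_apply]
  show (expSum i ((f * g) (FreeGroup.of j))).toAdd = _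
  rw [show (f * g) (FreeGroup.of j) = f (g (FreeGroup.of j)) from rfl, expSum_apply]
  rfl

/-- The matrix of the induced map on the abelianization, as a monoid homomorphism. -/
def matHom (n : ℕ) : FrAut n →* Matrix (Fin n) (Fin n) ℤ where
  toFun := mat
  map_one' := mat_one
  map_mul' := mat_mul

/-- The homomorphism `Aut(F_n) → GL_n(ℤ)` induced by abelianization. -/
def ρ (n : ℕ) : FrAut n →* GL (Fin n) ℤ := (matHom n).toHomUnits

/-- The composition of `ρ` with the determinant. -/
def detρ (n : ℕ) : FrAut n →* ℤˣ := (Matrix.GeneralLinearGroup.det).comp (ρ n)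

/-- The special automorphism group `SAut(F_n)`: automorphisms whose induced matrix
has determinant `1`. -/
def SAut (n : ℕ) : Subgroup (FrAut n) := (detρ n).ker

/-- The Torelli subgroup `IA_n`, the kernel of `ρ`. -/
def IA (n : ℕ) : Subgroup (FrAut n) := (ρ n).ker

/-- The group of inner automorphisms of the free group. -/
def Inn (n : ℕ) : Subgroup (FrAut n) := (MulAut.conj (G := FreeGroup (Fin n))).range

instance Inn_normal (n : ℕ) : (Inn n).Normal := by
  constructor
  rintro - ⟨a, rfl⟩ g
  refine ⟨g a, ?_⟩
  ext y
  simp [MulAut.conj_apply, MulAut.mul_apply, _root_.map_mul, _root_.map_inv]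

/-- The outer automorphism group `Out(F_n)`. -/
abbrev OutF (n : ℕ) := FrAut n ⧸ Inn n

/-- The projection `Aut(F_n) → Out(F_n)`. -/
def toOut (n : ℕ) : FrAut n →* OutF n := QuotientGroup.mk' (Inn n)

lemma mat_conj {n : ℕ} (g : FreeGroup (Fin n)) : mat (MulAut.conj g) = 1 := by
  rw [← mat_one (n := n)]
  ext i j
  simp only [mat, Matrix.of_apply, MulAut.conj_apply, MulAut.one_apply, _root_.map_mul,
    _root_.map_inv, toAdd_mul, toAdd_inv]
  omega

lemma ρ_conj {n : ℕ} (g : FreeGroup (Fin n)) : ρ n (MulAut.conj g) = 1 :=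
  Units.ext (mat_conj g)

/-- The homomorphism `Out(F_n) → GL_n(ℤ)` induced by abelianization. -/
def ρOut (n : ℕ) : OutF n →* GL (Fin n) ℤ :=
  QuotientGroup.lift (Inn n) (ρ n) (by rintro - ⟨g, rfl⟩; exact ρ_conj g)

/-- The composition of `ρOut` with the determinant. -/
def detρOut (n : ℕ) : OutF n →* ℤˣ := (Matrix.GeneralLinearGroup.det).comp (ρOut n)

/-- The special outer automorphism group `SOut(F_n)`. -/
def SOut (n : ℕ) : Subgroup (OutF n) := (detρOut n).ker

/-- Entrywise reduction `GL_n(ℤ) → GL_n(ℤ/ℓℤ)`. -/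
def redGL (n ℓ : ℕ) : GL (Fin n) ℤ →* GL (Fin n) (ZMod ℓ) :=
  Units.map (RingHom.mapMatrix (Int.castRingHom (ZMod ℓ))).toMonoidHom

/-- The subgroup `GΓ_n(ℓ)` of `GL_n(ℤ)` of matrices congruent to the identity mod `ℓ`. -/
def GGamma (n ℓ : ℕ) : Subgroup (GL (Fin n) ℤ) := (redGL n ℓ).ker

/-- The level `ℓ` congruence subgroup `Γ_n(ℓ)` (viewed inside `GL_n(ℤ)`): matrices with
determinant `1` that are congruent to the identity mod `ℓ`. -/
def GammaGL (n ℓ : ℕ) : Subgroup (GL (Fin n) ℤ) :=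
  GGamma n ℓ ⊓ (Matrix.GeneralLinearGroup.det).ker

/-- Reduction `SL_n(ℤ) → SL_n(ℤ/ℓℤ)`. -/
def redSL (n ℓ : ℕ) : Matrix.SpecialLinearGroup (Fin n) ℤ →*
    Matrix.SpecialLinearGroup (Fin n) (ZMod ℓ) :=
  Matrix.SpecialLinearGroup.map (Int.castRingHom (ZMod ℓ))

/-- Projection `SL_n(ℤ/ℓℤ) → PSL_n(ℤ/ℓℤ)`. -/
def projPSL (n ℓ : ℕ) : Matrix.SpecialLinearGroup (Fin n) (ZMod ℓ) →*
    Matrix.ProjectiveSpecialLinearGroup (Fin n) (ZMod ℓ) :=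
  QuotientGroup.mk' _

open FreeGroup (invRev IsReduced)

section CommonPrefix

variable {α : Type*} [DecidableEq α]

/-- The length of the longest common prefix of two lists. -/
def commonPrefixLength : List α → List α → ℕ
  | a :: l, b :: m => if a = b then commonPrefixLength l m + 1 else 0
  | _, _ => 0

lemma commonPrefixLength_comm (l m : List α) :
    commonPrefixLength l m = commonPrefixLength m l := by
  induction l generalizing m with
  | nil => cases m <;> rfl
  | cons a l ih =>
    cases m with
    | nil => rfl
    | cons b m => simp only [commonPrefixLength, ih m, eq_comm]

lemma commonPrefixLength_self (l : List α) : commonPrefixLength l l = l.length := by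
  induction l with
  | nil => rfl
  | cons a l ih => simp [commonPrefixLength, ih]

/-- The common prefix length is an ultrametric. -/
lemma commonPrefixLength_eq_of_lt {l m k : List α}
    (h : commonPrefixLength l m < commonPrefixLength k m) :
    commonPrefixLength l k = commonPrefixLength l m := by
  induction m generalizing l k with
  | nil => cases k <;> simp [commonPrefixLength] at h
  | cons b m ih =>
    rcases l with _ | ⟨a, l⟩ <;> rcases k with _ | ⟨c, k⟩ <;> simp only [commonPrefixLength] at h ⊢
    · omega
    · split_ifs at h ⊢ <;> grind

lemma exists_append_eq_append (l m : List α) :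
    ∃ s a b, l = s ++ a ∧ m = s ++ b ∧ s.length = commonPrefixLength l m ∧
      ∀ x ∈ a.head?, ∀ y ∈ b.head?, x ≠ y := by
  induction l generalizing m with
  | nil => exact ⟨[], [], m, by simp [commonPrefixLength]⟩
  | cons x l ih =>
    rcases m with _ | ⟨y, m⟩
    · exact ⟨[], x :: l, [], by simp [commonPrefixLength]⟩
    · by_cases hxy : x = y
      · subst hxy
        obtain ⟨s, a, b, rfl, rfl, hs, hab⟩ := ih m
        exact ⟨x :: s, a, b, by simp, by simp, by simp [commonPrefixLength, hs], hab⟩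
      · exact ⟨[], x :: l, y :: m, by simp [commonPrefixLength, hxy]⟩

end CommonPrefix

section Cancellation

variable {α : Type*} [DecidableEq α]

lemma isReduced_invRev_append {a b : List (α × Bool)} (ha : IsReduced a) (hb : IsReduced b)
    (hab : ∀ x ∈ a.head?, ∀ y ∈ b.head?, x ≠ y) : IsReduced (invRev a ++ b) := by
  have ha' : IsReduced (invRev a) := by
    rw [FreeGroup.isReduced_iff_reduce_eq, FreeGroup.reduce_invRev, ha.reduce_eq]
  refine List.isChain_append.2 ⟨ha', hb, ?_⟩
  intro x hx y hy hxy
  cases a with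
  | nil => simp at hx
  | cons c a =>
    have hc := hab c (by simp) y hy
    simp only [invRev, List.map_cons, List.reverse_cons, List.getLast?_concat, Option.mem_def,
      Option.some.injEq] at hx
    subst hx
    rcases c with ⟨c, ε⟩
    rcases y with ⟨y, δ⟩
    simp only at hxy
    subst hxy
    cases ε <;> cases δ <;> simp_all

/-- The number of letters that cancel in the product `u⁻¹ * v`. -/
def cancellation (u v : FreeGroup α) : ℕ := commonPrefixLength u.toWord v.toWord

lemma cancellation_comm (u v : FreeGroup α) : cancellation u v = cancellation v u :=
  commonPrefixLength_comm _ _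

lemma cancellation_self (u : FreeGroup α) : cancellation u u = u.norm :=
  commonPrefixLength_self _

lemma exists_toWord_inv_mul (u v : FreeGroup α) :
    ∃ s a b, u.toWord = s ++ a ∧ v.toWord = s ++ b ∧ s.length = cancellation u v ∧
      (u⁻¹ * v).toWord = invRev a ++ b := by
  obtain ⟨s, a, b, hu, hv, hs, hab⟩ := exists_append_eq_append u.toWord v.toWord
  refine ⟨s, a, b, hu, hv, hs, ?_⟩
  have hra : IsReduced a := (FreeGroup.isReduced_toWord (x := u)).infix ⟨s, [], by simp [hu]⟩
  have hrb : IsReduced b := (FreeGroup.isReduced_toWord (x := v)).infix ⟨s, [], by simp [hv]⟩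
  rw [← (isReduced_invRev_append hra hrb hab).reduce_eq, ← FreeGroup.toWord_mk,
    FreeGroup.toWord_inj, ← FreeGroup.mk_toWord (x := u), ← FreeGroup.mk_toWord (x := v), hu, hv,
    ← FreeGroup.mul_mk, ← FreeGroup.mul_mk, ← FreeGroup.mul_mk, ← FreeGroup.inv_mk]
  group

lemma norm_inv_mul_add (u v : FreeGroup α) :
    (u⁻¹ * v).norm + 2 * cancellation u v = u.norm + v.norm := by
  obtain ⟨s, a, b, hu, hv, hs, hw⟩ := exists_toWord_inv_mul u v
  simp only [FreeGroup.norm, hu, hv, hw, ← hs, List.length_append, FreeGroup.invRev_length]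
  ring

lemma two_mul_cancellation_inv_self_lt {v : FreeGroup α} (hv : v ≠ 1) :
    2 * cancellation v⁻¹ v < v.norm := by
  by_contra! hle
  obtain ⟨s, a, b, hu, hw, hs, -⟩ := exists_toWord_inv_mul v⁻¹ v
  have hlen : v.norm = s.length + b.length := by simp [FreeGroup.norm, hw]
  have hlen' : v.norm = s.length + a.length := by
    rw [← FreeGroup.norm_inv_eq]; simp [FreeGroup.norm, hu]
  have hinv : v.toWord = invRev a ++ invRev s := by
    rw [← FreeGroup.invRev_append, ← hu, FreeGroup.toWord_inv, FreeGroup.invRev_invRev]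
  rw [hw] at hinv
  obtain ⟨t, ht⟩ : invRev a <+: s := List.prefix_of_prefix_length_le ⟨invRev s, hinv.symm⟩ ⟨b, rfl⟩
    (by rw [FreeGroup.invRev_length]; omega)
  have hs' : t ++ b = invRev s := by
    rw [← ht, List.append_assoc] at hinv
    rw [← ht]
    exact List.append_cancel_left hinv
  have hs'' : t ++ b = invRev t ++ a := by
    rw [hs', ← ht, FreeGroup.invRev_append, FreeGroup.invRev_invRev]
  have ht' : t = invRev t := (List.append_inj hs'' (by simp)).1
  have hsq : FreeGroup.mk t = 1 := by
    rw [← self_eq_inv, FreeGroup.inv_mk]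
    exact congrArg FreeGroup.mk ht'
  have hb : FreeGroup.mk b = FreeGroup.mk (invRev s) := by
    rw [← hs', ← FreeGroup.mul_mk, hsq, one_mul]
  apply hv
  rw [← FreeGroup.mk_toWord (x := v), hw, ← FreeGroup.mul_mk, hb, ← FreeGroup.inv_mk, mul_inv_cancel]

end Cancellation

section Weight

variable {n : ℕ}

/-- A positive digit attached to every letter of the free group of rank `n`. -/
def letterDigit (a : Fin n × Bool) : ℕ := 2 * a.1 + 1 + a.2.toNat

lemma letterDigit_lt (a : Fin n × Bool) : letterDigit a < 2 * n + 2 := by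
  have := a.1.2
  have := Bool.toNat_le a.2
  unfold letterDigit
  omega

lemma letterDigit_injective : Function.Injective (letterDigit (n := n)) := by
  rintro ⟨a, ε⟩ ⟨b, δ⟩ h
  simp only [letterDigit] at h
  cases ε <;> cases δ <;> simp [Fin.ext_iff] at h ⊢ <;> omega

lemma lt_of_mem_map_letterDigit (l : List (Fin n × Bool)) :
    ∀ d ∈ l.map letterDigit, d < 2 * n + 2 := by
  intro d hd
  obtain ⟨a, -, rfl⟩ := List.mem_map.1 hd
  exact letterDigit_lt a

/-- A word, read as a number in base `2 * n + 2`, the last letter being the leading digit. -/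
def wordCode (l : List (Fin n × Bool)) : ℕ := Nat.ofDigits (2 * n + 2) (l.map letterDigit)

lemma wordCode_append (l m : List (Fin n × Bool)) :
    wordCode (l ++ m) = wordCode l + (2 * n + 2) ^ l.length * wordCode m := by
  simp [wordCode, Nat.ofDigits_append]

lemma wordCode_lt (l : List (Fin n × Bool)) : wordCode l < (2 * n + 2) ^ l.length := by
  have := Nat.ofDigits_lt_base_pow_length' (b := 2 * n) (l := l.map letterDigit)
    (lt_of_mem_map_letterDigit l)
  simpa [wordCode] using this

lemma wordCode_inj {l m : List (Fin n × Bool)} (hlen : l.length = m.length)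
    (h : wordCode l = wordCode m) : l = m := by
  refine letterDigit_injective.list_map (Nat.ofDigits_inj_of_len_eq (b := 2 * n + 2) (by omega)
    (by simpa using hlen) ?_ ?_ h) <;>
  exact lt_of_mem_map_letterDigit _

lemma wordCode_lt_of_length_lt {l m : List (Fin n × Bool)} (h : l.length < m.length) :
    wordCode l < wordCode m := by
  have hm : m.map letterDigit ≠ [] := by
    rintro hm
    simp_all
  have hlast : (m.map letterDigit).getLast hm ≠ 0 := by
    simp [List.getLast_map, letterDigit]
  have hle := Nat.pow_length_le_mul_ofDigits (b := 2 * n) hm hlast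
  rw [List.length_map] at hle
  have hpow : (2 * n + 2) ^ (l.length + 1) ≤ (2 * n + 2) ^ m.length :=
    Nat.pow_le_pow_right (by omega) h
  rw [pow_succ'] at hpow
  exact (wordCode_lt l).trans_le (Nat.le_of_mul_le_mul_left (hpow.trans hle) (by omega))

/-- A complexity on the free group which refines the length and is invariant under inversion. -/
def weight (u : FreeGroup (Fin n)) : ℕ := wordCode u.toWord + wordCode (invRev u.toWord)

lemma weight_inv (u : FreeGroup (Fin n)) : weight u⁻¹ = weight u := by
  simp [weight, add_comm, FreeGroup.toWord_inv, FreeGroup.invRev_invRev]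

lemma norm_le_of_weight_le {u v : FreeGroup (Fin n)} (h : weight u ≤ weight v) :
    u.norm ≤ v.norm := by
  by_contra! hlt
  refine h.not_gt (add_lt_add (wordCode_lt_of_length_lt hlt) (wordCode_lt_of_length_lt ?_))
  rw [FreeGroup.invRev_length, FreeGroup.invRev_length]
  exact hlt

lemma wordCode_le_of_weight_le {u v : FreeGroup (Fin n)} {a p q : List (Fin n × Bool)}
    (hu : u.toWord = a ++ p) (hv : v.toWord = a ++ q) (hlen : p.length = q.length)
    (hle : p.length ≤ a.length) (h : weight u ≤ weight v) : wordCode p ≤ wordCode q := by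
  by_contra! hlt
  refine h.not_gt ?_
  simp only [weight, hu, hv, FreeGroup.invRev_append, wordCode_append, FreeGroup.invRev_length,
    hlen]
  have hq := wordCode_lt (invRev q)
  rw [FreeGroup.invRev_length, ← hlen] at hq
  have hpow : (2 * n + 2) ^ p.length ≤ (2 * n + 2) ^ a.length :=
    Nat.pow_le_pow_right (by omega) hle
  have := Nat.mul_le_mul_left ((2 * n + 2) ^ a.length) (Nat.succ_le_of_lt hlt)
  rw [Nat.succ_eq_add_one, mul_add] at this
  omega

end Weight

section NielsenReduced

variable {n : ℕ}

/-- The inverse of a letter. -/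
def letterInv (a : Fin n × Bool) : Fin n × Bool := (a.1, !a.2)

lemma letterInv_letterInv (a : Fin n × Bool) : letterInv (letterInv a) = a := by
  simp [letterInv]

lemma eq_or_eq_letterInv_of_fst_eq {a b : Fin n × Bool} (h : a.1 = b.1) :
    a = b ∨ a = letterInv b := by
  rcases a with ⟨a, ε⟩
  rcases b with ⟨b, δ⟩
  cases ε <;> cases δ <;> simp_all [letterInv]

/-- A family of elements indexed by the letters, compatible with inversion, whose weights cannot
be decreased by an elementary Nielsen transformation. -/
structure IsWeightMinimal (V : Fin n × Bool → FreeGroup (Fin n)) : Prop where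
  map_inv : ∀ a, V (letterInv a) = (V a)⁻¹
  ne_one : ∀ a, V a ≠ 1
  weight_le : ∀ a b, a.1 ≠ b.1 → weight (V a) ≤ weight (V a * V b)

namespace IsWeightMinimal

variable {V : Fin n × Bool → FreeGroup (Fin n)}

lemma two_mul_cancellation_le_left (hV : IsWeightMinimal V) {a b : Fin n × Bool}
    (hab : b ≠ letterInv a) : 2 * cancellation (V a)⁻¹ (V b) ≤ (V a).norm := by
  by_cases h : a.1 = b.1
  · obtain rfl := (eq_or_eq_letterInv_of_fst_eq h.symm).resolve_right hab
    exact (two_mul_cancellation_inv_self_lt (hV.ne_one b)).le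
  · have hw := hV.weight_le (letterInv b) (letterInv a) (Ne.symm h)
    rw [hV.map_inv, hV.map_inv, ← _root_.mul_inv_rev, weight_inv, weight_inv] at hw
    have hn := norm_inv_mul_add (V a)⁻¹ (V b)
    rw [inv_inv, FreeGroup.norm_inv_eq] at hn
    have := norm_le_of_weight_le hw
    omega

lemma two_mul_cancellation_le_right (hV : IsWeightMinimal V) {a b : Fin n × Bool}
    (hab : b ≠ letterInv a) : 2 * cancellation (V a)⁻¹ (V b) ≤ (V b).norm := by
  have h := hV.two_mul_cancellation_le_left (a := letterInv b) (b := letterInv a)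
    (by rw [letterInv_letterInv]; exact hab.symm)
  rwa [hV.map_inv, hV.map_inv, inv_inv, FreeGroup.norm_inv_eq, cancellation_comm] at h

lemma fst_ne_of_le_two_mul_cancellation (hV : IsWeightMinimal V) {a b : Fin n × Bool}
    (hab : b ≠ letterInv a) (h : (V b).norm ≤ 2 * cancellation (V a)⁻¹ (V b)) : a.1 ≠ b.1 := by
  intro hfst
  obtain rfl := (eq_or_eq_letterInv_of_fst_eq hfst.symm).resolve_right hab
  exact h.not_gt (two_mul_cancellation_inv_self_lt (hV.ne_one b))

/-- In a product of three letters the middle factor is not completely cancelled. -/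
lemma cancellation_add_lt (hV : IsWeightMinimal V) {a b d : Fin n × Bool}
    (hab : b ≠ letterInv a) (hbd : d ≠ letterInv b) :
    cancellation (V a)⁻¹ (V b) + cancellation (V b)⁻¹ (V d) < (V b).norm := by
  by_contra! hle
  have h₁ := hV.two_mul_cancellation_le_left hab
  have h₂ := hV.two_mul_cancellation_le_right hab
  have h₃ := hV.two_mul_cancellation_le_left hbd
  have h₄ := hV.two_mul_cancellation_le_right hbd
  have hab' : a.1 ≠ b.1 := hV.fst_ne_of_le_two_mul_cancellation hab (by omega)
  have hbd' : d.1 ≠ b.1 := by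
    refine hV.fst_ne_of_le_two_mul_cancellation (a := letterInv d) (b := letterInv b) ?_ ?_
    · rw [letterInv_letterInv]
      exact hbd.symm
    · rw [hV.map_inv, hV.map_inv, inv_inv, FreeGroup.norm_inv_eq, cancellation_comm]
      omega
  obtain ⟨s, x, y, hx, hy, hs, hxy⟩ := exists_toWord_inv_mul (V a)⁻¹ (V b)
  obtain ⟨t, z, w, hz, hw, ht, hzw⟩ := exists_toWord_inv_mul (V b)⁻¹ (V d)
  rw [inv_inv] at hxy hzw
  have ha : (V a).toWord = invRev x ++ invRev s := by
    rw [← FreeGroup.invRev_append, ← hx, FreeGroup.toWord_inv, FreeGroup.invRev_invRev]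
  have hna : (V a).norm = x.length + s.length := by simp [FreeGroup.norm, ha]
  have hnb : (V b).norm = s.length + y.length := by simp [FreeGroup.norm, hy]
  have hnd : (V d).norm = t.length + w.length := by simp [FreeGroup.norm, hw]
  have hts : t = invRev y ∧ z = invRev s := by
    rw [FreeGroup.toWord_inv, hy, FreeGroup.invRev_append] at hz
    have := List.append_inj hz (by rw [FreeGroup.invRev_length]; omega)
    exact ⟨this.1.symm, this.2.symm⟩
  obtain ⟨rfl, rfl⟩ := hts
  rw [FreeGroup.invRev_length] at ht hnd
  rw [FreeGroup.invRev_invRev] at hzw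
  have hle₁ : wordCode (invRev s) ≤ wordCode y :=
    wordCode_le_of_weight_le ha hxy (by rw [FreeGroup.invRev_length]; omega)
      (by rw [FreeGroup.invRev_length, FreeGroup.invRev_length]; omega) (hV.weight_le a b hab')
  have hle₂ : wordCode y ≤ wordCode (invRev s) := by
    have hweight := hV.weight_le (letterInv d) (letterInv b) hbd'
    rw [hV.map_inv, hV.map_inv, ← _root_.mul_inv_rev] at hweight
    refine wordCode_le_of_weight_le (a := invRev w) ?_ ?_ ?_ ?_ hweight
    · rw [FreeGroup.toWord_inv, hw, FreeGroup.invRev_append, FreeGroup.invRev_invRev]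
    · rw [FreeGroup.toWord_inv, hzw, FreeGroup.invRev_append]
    · rw [FreeGroup.invRev_length]; omega
    · rw [FreeGroup.invRev_length]; omega
  have hsy : invRev s = y :=
    wordCode_inj (by rw [FreeGroup.invRev_length]; omega) (le_antisymm hle₁ hle₂)
  apply hV.ne_one b
  rw [← FreeGroup.mk_toWord (x := V b), hy, ← hsy, ← FreeGroup.mul_mk, ← FreeGroup.inv_mk,
    mul_inv_cancel]

lemma norm_prod_reduced (hV : IsWeightMinimal V) (a : Fin n × Bool) (l : List (Fin n × Bool))
    (hl : IsReduced (a :: l)) :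
    (V a).norm ≤ (((a :: l).map V).prod).norm ∧
    ((((a :: l).map V).prod).norm = 1 → l = []) ∧
    ∀ b, a ≠ letterInv b →
      cancellation (V b)⁻¹ (V a) < cancellation ((a :: l).map V).prod (V a) := by
  induction l generalizing a with
  | nil =>
    refine ⟨by simp, by simp, fun b hb => ?_⟩
    have h₁ := hV.two_mul_cancellation_le_right hb
    have h₂ : (V a).norm ≠ 0 := by simpa using hV.ne_one a
    simp only [List.map_cons, List.map_nil, List.prod_cons, List.prod_nil, mul_one,
      cancellation_self]
    omega
  | cons c l ih =>
    obtain ⟨hc, -, hcancel⟩ := ih c (List.IsChain.tail hl)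
    have hca : c ≠ letterInv a := by
      have hrel := (List.isChain_cons_cons.1 hl).1
      rintro rfl
      simp [letterInv] at hrel
    set P := ((c :: l).map V).prod with hP
    have hprod : ((a :: c :: l).map V).prod = V a * P := by simp [hP]
    have hm : cancellation (V a)⁻¹ P = cancellation (V a)⁻¹ (V c) :=
      commonPrefixLength_eq_of_lt (hcancel a hca)
    have hn := norm_inv_mul_add (V a)⁻¹ P
    rw [inv_inv, FreeGroup.norm_inv_eq, hm] at hn
    have h₁ := hV.two_mul_cancellation_le_left hca
    have h₂ := hV.two_mul_cancellation_le_right hca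
    have h₃ : (V c).norm ≠ 0 := by simpa using hV.ne_one c
    have h₄ : (V a).norm ≠ 0 := by simpa using hV.ne_one a
    rw [hprod]
    refine ⟨by omega, by omega, fun b hb => ?_⟩
    have hn' := norm_inv_mul_add (V a) (V a * P)
    rw [inv_mul_cancel_left] at hn'
    have h₅ := hV.cancellation_add_lt hb hca
    rw [cancellation_comm (V a * P)]
    omega

end IsWeightMinimal

end NielsenReduced

section Generators

variable {n : ℕ}

/-- A letter, as an element of the free group. -/
def letter (a : Fin n × Bool) : FreeGroup (Fin n) := FreeGroup.mk [a]

lemma letter_true (i : Fin n) : letter (i, true) = FreeGroup.of i := rfl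

lemma letter_false (i : Fin n) : letter (i, false) = (FreeGroup.of i)⁻¹ := rfl

lemma letter_letterInv (a : Fin n × Bool) : letter (letterInv a) = (letter a)⁻¹ := rfl

lemma letter_ne_one (a : Fin n × Bool) : letter a ≠ 1 := by
  rcases a with ⟨i, _ | _⟩
  · simp [letter_false]
  · simp [letter_true]

lemma FrAut.ext_of_letter {f g : FrAut n} (a : Fin n × Bool) (ha : f (letter a) = g (letter a))
    (h : ∀ k, k ≠ a.1 → f (FreeGroup.of k) = g (FreeGroup.of k)) : f = g := by
  refine MulEquiv.toMonoidHom_injective (FreeGroup.ext_hom _ _ fun k => ?_)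
  show f (FreeGroup.of k) = g (FreeGroup.of k)
  by_cases hk : k = a.1
  · subst hk
    rcases a with ⟨i, _ | _⟩
    · simpa [letter_false] using ha
    · exact ha
  · exact h k hk

lemma FrAut.ext_of {f g : FrAut n} (h : ∀ k, f (FreeGroup.of k) = g (FreeGroup.of k)) : f = g :=
  MulEquiv.toMonoidHom_injective (FreeGroup.ext_hom _ _ h)

lemma map_prod_letter {M : Type*} [Group M] (φ : FreeGroup (Fin n) →* M)
    (l : List (Fin n × Bool)) : (l.map fun a => φ (letter a)).prod = φ (FreeGroup.mk l) := by
  induction l with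
  | nil => simp [← FreeGroup.one_eq_mk]
  | cons a l ih =>
    rw [List.map_cons, List.prod_cons, ih, ← map_mul, letter, FreeGroup.mul_mk,
      List.singleton_append]

/-- The endomorphism sending the letter `a` to `a * b` and fixing the other generators. -/
def transvectionHom (a b : Fin n × Bool) : FreeGroup (Fin n) →* FreeGroup (Fin n) :=
  FreeGroup.lift fun k => if k = a.1 then
    (if a.2 then FreeGroup.of k * letter b else (letter b)⁻¹ * FreeGroup.of k) else FreeGroup.of k

lemma transvectionHom_letter (a b : Fin n × Bool) :
    transvectionHom a b (letter a) = letter a * letter b := by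
  rcases a with ⟨i, _ | _⟩ <;> simp [letter_true, letter_false, transvectionHom]

lemma transvectionHom_of (a b : Fin n × Bool) {k : Fin n} (hk : k ≠ a.1) :
    transvectionHom a b (FreeGroup.of k) = FreeGroup.of k := by
  simp [transvectionHom, hk]

lemma transvectionHom_letter_of_ne (a b : Fin n × Bool) {c : Fin n × Bool} (hc : c.1 ≠ a.1) :
    transvectionHom a b (letter c) = letter c := by
  rcases c with ⟨i, _ | _⟩
  · rw [letter_false, map_inv, transvectionHom_of a b hc]
  · exact transvectionHom_of a b hc

lemma transvectionHom_comp {a b : Fin n × Bool} (hab : a.1 ≠ b.1) :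
    (transvectionHom a (letterInv b)).comp (transvectionHom a b) = MonoidHom.id _ := by
  refine FreeGroup.ext_hom _ _ fun k => ?_
  by_cases hk : k = a.1
  · have : (transvectionHom a (letterInv b)).comp (transvectionHom a b) (letter a) = letter a := by
      rw [MonoidHom.comp_apply, transvectionHom_letter, map_mul, transvectionHom_letter,
        transvectionHom_letter_of_ne _ _ hab.symm, letter_letterInv, inv_mul_cancel_right]
    subst hk
    rcases a with ⟨i, _ | _⟩
    · simpa [letter_false] using this
    · exact this
  · rw [MonoidHom.comp_apply, transvectionHom_of _ _ hk, transvectionHom_of _ _ hk,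
      MonoidHom.id_apply]

/-- The automorphism sending the letter `a` to `a * b` and fixing the other generators. -/
def transvection (a b : Fin n × Bool) (hab : a.1 ≠ b.1) : FrAut n :=
  MonoidHom.toMulEquiv (transvectionHom a b) (transvectionHom a (letterInv b))
    (transvectionHom_comp hab)
    (by simpa only [letterInv_letterInv] using transvectionHom_comp (b := letterInv b) hab)

lemma transvection_letter {a b : Fin n × Bool} (hab : a.1 ≠ b.1) :
    transvection a b hab (letter a) = letter a * letter b :=
  transvectionHom_letter a b

lemma transvection_letter_of_ne {a b : Fin n × Bool} (hab : a.1 ≠ b.1) {c : Fin n × Bool}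
    (hc : c.1 ≠ a.1) : transvection a b hab (letter c) = letter c :=
  transvectionHom_letter_of_ne a b hc

lemma transvection_of {a b : Fin n × Bool} (hab : a.1 ≠ b.1) {k : Fin n}
    (hk : k ≠ a.1) : transvection a b hab (FreeGroup.of k) = FreeGroup.of k :=
  transvectionHom_of a b hk

/-- The endomorphism sending the generator `k` to the letter `(σ k, s k)`. -/
def signedPermHom (σ : Equiv.Perm (Fin n)) (s : Fin n → Bool) :
    FreeGroup (Fin n) →* FreeGroup (Fin n) :=
  FreeGroup.lift fun k => letter (σ k, s k)

lemma signedPermHom_letter (σ : Equiv.Perm (Fin n)) (s : Fin n → Bool) (a : Fin n × Bool) :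
    signedPermHom σ s (letter a) = letter (σ a.1, s a.1 == a.2) := by
  rcases a with ⟨i, _ | _⟩
  · rw [letter_false, map_inv]
    simp only [signedPermHom, FreeGroup.lift_apply_of, ← letter_letterInv, letterInv]
    simp
  · rw [letter_true]
    simp [signedPermHom]

/-- The automorphism sending the generator `k` to the letter `(σ k, s k)`. -/
def signedPerm (σ : Equiv.Perm (Fin n)) (s : Fin n → Bool) : FrAut n :=
  MonoidHom.toMulEquiv (signedPermHom σ s) (signedPermHom σ⁻¹ fun k => s (σ⁻¹ k))
    (FreeGroup.ext_hom _ _ fun k => by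
      rw [MonoidHom.comp_apply, ← letter_true, signedPermHom_letter, signedPermHom_letter]
      simp)
    (FreeGroup.ext_hom _ _ fun k => by
      rw [MonoidHom.comp_apply, ← letter_true, signedPermHom_letter, signedPermHom_letter]
      simp)

lemma signedPerm_letter (σ : Equiv.Perm (Fin n)) (s : Fin n → Bool) (a : Fin n × Bool) :
    signedPerm σ s (letter a) = letter (σ a.1, s a.1 == a.2) :=
  signedPermHom_letter σ s a

lemma signedPerm_of (σ : Equiv.Perm (Fin n)) (s : Fin n → Bool) (k : Fin n) :
    signedPerm σ s (FreeGroup.of k) = letter (σ k, s k) := by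
  rw [← letter_true, signedPerm_letter]
  simp

lemma signedPerm_mul (σ τ : Equiv.Perm (Fin n)) (s t : Fin n → Bool) :
    signedPerm σ s * signedPerm τ t = signedPerm (σ * τ) fun k => s (τ k) == t k :=
  FrAut.ext_of fun k => by
    rw [MulAut.mul_apply, signedPerm_of, signedPerm_of, signedPerm_letter, Equiv.Perm.mul_apply]

lemma signedPerm_one : signedPerm (1 : Equiv.Perm (Fin n)) (fun _ => true) = 1 :=
  FrAut.ext_of fun k => by rw [signedPerm_of]; rfl

end Generators

section NielsenGeneration

variable {n : ℕ}

lemma weight_apply_letter (f : FrAut n) (a : Fin n × Bool) :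
    weight (f (letter a)) = weight (f (FreeGroup.of a.1)) := by
  rcases a with ⟨i, _ | _⟩
  · rw [letter_false, map_inv, weight_inv]
  · rfl

lemma exists_signedPerm_of_isWeightMinimal (g : FrAut n)
    (hg : IsWeightMinimal fun a => g (letter a)) : ∃ σ s, g⁻¹ = signedPerm σ s := by
  have hletter : ∀ k, ∃ a : Fin n × Bool, g⁻¹ (FreeGroup.of k) = letter a := by
    intro k
    have hprod := map_prod_letter (g : FreeGroup (Fin n) →* FreeGroup (Fin n))
      (g⁻¹ (FreeGroup.of k)).toWord
    rw [FreeGroup.mk_toWord] at hprod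
    have hred := FreeGroup.isReduced_toWord (x := g⁻¹ (FreeGroup.of k))
    have hmk := FreeGroup.mk_toWord (x := g⁻¹ (FreeGroup.of k))
    have hgk : g (g⁻¹ (FreeGroup.of k)) = FreeGroup.of k := MulAut.apply_inv_self _ _ _
    cases hw : (g⁻¹ (FreeGroup.of k)).toWord with
    | nil =>
      rw [FreeGroup.toWord_eq_nil_iff] at hw
      rw [hw, map_one] at hgk
      exact absurd hgk.symm (FreeGroup.of_ne_one k)
    | cons a l =>
      rw [hw] at hred hmk hprod
      have hnorm := congrArg FreeGroup.norm (hprod.trans hgk)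
      rw [FreeGroup.norm_of] at hnorm
      obtain rfl := (hg.norm_prod_reduced a l hred).2.1 hnorm
      exact ⟨a, hmk.symm⟩
  choose a ha using hletter
  have hinj : Function.Injective fun k => (a k).1 := by
    intro k l hkl
    have hkl' : FreeGroup.of k = FreeGroup.of l ∨ FreeGroup.of k = (FreeGroup.of l)⁻¹ := by
      refine (eq_or_eq_letterInv_of_fst_eq hkl).imp (fun h => ?_) (fun h => ?_) <;> apply g⁻¹.injective
      · rw [ha, ha, h]
      · rw [map_inv, ha, ha, h, letter_letterInv]
    rcases hkl' with h | h
    · exact FreeGroup.of_injective h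
    · have := congrArg FreeGroup.toWord h
      simp [FreeGroup.toWord_inv, invRev] at this
  refine ⟨Equiv.ofBijective _ (Finite.injective_iff_bijective.1 hinj), fun k => (a k).2, ?_⟩
  refine FrAut.ext_of fun k => ?_
  rw [ha, signedPerm_of]
  rfl

/-- **Nielsen's theorem**: the automorphism group of a free group of finite rank is generated by
transvections and signed permutations of the generators. -/
theorem eq_top_of_transvection_mem_of_signedPerm_mem (H : Subgroup (FrAut n))
    (htrans : ∀ a b hab, transvection a b hab ∈ H) (hperm : ∀ σ s, signedPerm σ s ∈ H) :
    H = ⊤ := by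
  refine (Subgroup.eq_top_iff' H).2 fun f => ?_
  obtain ⟨h, hmin⟩ : ∃ h : H, ∀ h' : H,
      ∑ k, weight ((f * h) (FreeGroup.of k)) ≤ ∑ k, weight ((f * h') (FreeGroup.of k)) :=
    ⟨_, fun h' => Function.argmin_le (fun h : H => ∑ k, weight ((f * h) (FreeGroup.of k))) h'⟩
  set g : FrAut n := f * h with hg
  have hgmin : IsWeightMinimal fun a => g (letter a) := by
    refine ⟨fun a => ?_, fun a ha => ?_, fun a b hab => ?_⟩
    · rw [letter_letterInv, map_inv]
    · exact letter_ne_one a (g.injective (by rw [ha, map_one]))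
    · have hle := hmin (h * ⟨transvection a b hab, htrans a b hab⟩)
      rw [Subgroup.coe_mul, ← mul_assoc, ← hg, ← Finset.add_sum_erase _ _ (Finset.mem_univ a.1),
        ← Finset.add_sum_erase _ _ (Finset.mem_univ a.1), ← weight_apply_letter g a,
        ← weight_apply_letter _ a, MulAut.mul_apply _ g, transvection_letter, map_mul] at hle
      refine Nat.le_of_add_le_add_right (hle.trans_eq (congrArg _ (Finset.sum_congr rfl ?_)))
      intro k hk
      rw [MulAut.mul_apply, transvection_of hab (Finset.ne_of_mem_erase hk)]
  obtain ⟨σ, s, hs⟩ := exists_signedPerm_of_isWeightMinimal g hgmin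
  have hgH : g ∈ H := inv_mem_iff.1 (hs ▸ hperm σ s)
  have := H.mul_mem hgH (H.inv_mem h.2)
  rwa [hg, mul_inv_cancel_right] at this

end NielsenGeneration

section NormalSubgroup

variable {n : ℕ}

lemma signedPerm_conj_transvection (σ : Equiv.Perm (Fin n)) (s : Fin n → Bool)
    {a b c d : Fin n × Bool} (hab : a.1 ≠ b.1) (hcd : c.1 ≠ d.1)
    (hc : signedPerm σ s (letter a) = letter c) (hd : signedPerm σ s (letter b) = letter d)
    (hσ : σ a.1 = c.1) :
    signedPerm σ s * transvection a b hab * (signedPerm σ s)⁻¹ = transvection c d hcd := by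
  rw [mul_inv_eq_iff_eq_mul]
  refine FrAut.ext_of_letter a ?_ fun k hk => ?_
  · rw [MulAut.mul_apply, MulAut.mul_apply, transvection_letter, map_mul, hc, hd,
      transvection_letter]
  · rw [MulAut.mul_apply, MulAut.mul_apply, transvection_of hab hk, signedPerm_of,
      transvection_letter_of_ne]
    simpa [← hσ] using hk

lemma exists_perm_apply_eq {α : Type*} [DecidableEq α] {i j k l : α} (hij : i ≠ j) (hkl : k ≠ l) :
    ∃ σ : Equiv.Perm α, σ i = k ∧ σ j = l := by
  refine ⟨Equiv.swap (Equiv.swap i k j) l * Equiv.swap i k, ?_, by simp⟩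
  rw [Equiv.Perm.mul_apply, Equiv.swap_apply_left]
  refine Equiv.swap_apply_of_ne_of_ne (fun h => hij ?_) hkl
  exact (Equiv.swap i k).injective ((Equiv.swap_apply_left i k).trans h)

/-- A normal subgroup containing one transvection contains all of them. -/
lemma transvection_mem_of_normal (M : Subgroup (FrAut n)) [M.Normal] {a b : Fin n × Bool}
    {hab : a.1 ≠ b.1} (h : transvection a b hab ∈ M) (c d : Fin n × Bool) (hcd : c.1 ≠ d.1) :
    transvection c d hcd ∈ M := by
  obtain ⟨σ, hσa, hσb⟩ := exists_perm_apply_eq hab hcd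
  rw [← signedPerm_conj_transvection σ (fun k => if k = a.1 then a.2 == c.2 else b.2 == d.2) hab hcd
    ?_ ?_ hσa]
  · exact Subgroup.Normal.conj_mem inferInstance _ h _
  · rw [signedPerm_letter, hσa, if_pos rfl]
    congr 1
    exact Prod.ext rfl (by cases a.2 <;> cases c.2 <;> rfl)
  · rw [signedPerm_letter, hσb, if_neg hab.symm]
    congr 1
    exact Prod.ext rfl (by cases b.2 <;> cases d.2 <;> rfl)

/-- The automorphism inverting the generator `i` and fixing the others. -/
def inversion (i : Fin n) : FrAut n := signedPerm 1 fun k => decide (k ≠ i)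

lemma inversion_mul_self (i : Fin n) : inversion i * inversion i = 1 := by
  rw [inversion, signedPerm_mul, ← signedPerm_one]
  congr 1
  funext k
  by_cases hk : k = i <;> simp [hk]

/-- The quarter turn `i ↦ j ↦ i⁻¹` is a product of transvections. -/
lemma signedPerm_swap_eq_transvection_mul {i j : Fin n} (hij : i ≠ j) :
    signedPerm (Equiv.swap i j) (fun k => decide (k ≠ j)) =
      transvection (i, true) (j, true) hij * transvection (j, true) (i, false) hij.symm *
        transvection (i, false) (j, false) hij := by
  refine FrAut.ext_of_letter (i, false) ?_ fun k hki => ?_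
  · have hj : letter (j, false) = (letter (j, true))⁻¹ := rfl
    rw [MulAut.mul_apply, MulAut.mul_apply, transvection_letter, map_mul,
      transvection_letter_of_ne _ (c := (i, false)) hij, hj, map_inv, transvection_letter,
      _root_.mul_inv_rev, mul_inv_cancel_left, map_inv, transvection_letter_of_ne _ hij.symm,
      signedPerm_letter]
    simp [hij, letter_true, letter_false]
  · rw [MulAut.mul_apply, MulAut.mul_apply, transvection_of _ hki, signedPerm_of]
    by_cases hkj : k = j
    · subst hkj
      have hi : letter (i, false) = (letter (i, true))⁻¹ := rfl
      rw [← letter_true, transvection_letter, map_mul, transvection_letter_of_ne _ hij.symm, hi,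
        map_inv, transvection_letter, _root_.mul_inv_rev, mul_inv_cancel_left]
      simp [letter_true, letter_false]
    · rw [transvection_of _ hkj, transvection_of hij (a := (i, true)) hki,
        Equiv.swap_apply_of_ne_of_ne hki hkj]
      simp [hkj, letter_true]

lemma signedPerm_swap_eq_mul_inversion (i j : Fin n) :
    signedPerm (Equiv.swap i j) (fun _ => true) =
      signedPerm (Equiv.swap i j) (fun k => decide (k ≠ j)) * inversion j := by
  rw [inversion, signedPerm_mul, mul_one]
  congr 1
  funext k
  by_cases hk : k = j <;> simp [hk]

variable {M : Subgroup (FrAut n)}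

lemma signedPerm_swap_mem (hM : ∀ a b hab, transvection a b hab ∈ M) {i j : Fin n} (hij : i ≠ j) :
    signedPerm (Equiv.swap i j) (fun k => decide (k ≠ j)) ∈ M := by
  rw [signedPerm_swap_eq_transvection_mul hij]
  exact M.mul_mem (M.mul_mem (hM _ _ _) (hM _ _ _)) (hM _ _ _)

lemma inversion_mem_of_inversion_mem (hM : ∀ a b hab, transvection a b hab ∈ M) {i : Fin n}
    (hi : inversion i ∈ M) (j : Fin n) : inversion j ∈ M := by
  rcases eq_or_ne i j with rfl | hij
  · exact hi
  · have h := signedPerm_swap_eq_mul_inversion j i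
    rw [Equiv.swap_comm, signedPerm_swap_eq_mul_inversion i j] at h
    refine (M.mul_mem_cancel_left (signedPerm_swap_mem hM hij)).1 ?_
    rw [h, Equiv.swap_comm]
    exact M.mul_mem (signedPerm_swap_mem hM hij.symm) hi

lemma signedPerm_one_mem (hM : ∀ j, inversion j ∈ M) (s : Fin n → Bool) : signedPerm 1 s ∈ M := by
  suffices h : ∀ S : Finset (Fin n), signedPerm 1 (fun k => decide (k ∉ S)) ∈ M by
    simpa using h (Finset.univ.filter fun k => s k = false)
  intro S
  induction S using Finset.induction_on with
  | empty =>
    simp [signedPerm_one]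
  | insert a S ha ih =>
    have h := M.mul_mem ih (hM a)
    rw [inversion, signedPerm_mul, one_mul] at h
    convert h using 2
    funext k
    by_cases hk : k = a
    · subst hk
      simp [ha]
    · by_cases hkS : k ∈ S <;> simp [hk, hkS]

/-- A subgroup containing all transvections and one inversion is everything. -/
lemma eq_top_of_transvection_mem_of_inversion_mem (hM : ∀ a b hab, transvection a b hab ∈ M)
    {i : Fin n} (hi : inversion i ∈ M) : M = ⊤ := by
  have hinv := inversion_mem_of_inversion_mem hM hi
  have hswap : ∀ σ : Equiv.Perm (Fin n), signedPerm σ (fun _ => true) ∈ M := by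
    intro σ
    induction σ using Equiv.Perm.swap_induction_on with
    | one => exact signedPerm_one (n := n) ▸ M.one_mem
    | swap_mul τ j k hjk ih =>
      have h := M.mul_mem (M.mul_mem (signedPerm_swap_mem hM hjk) (hinv k)) ih
      rw [← signedPerm_swap_eq_mul_inversion, signedPerm_mul] at h
      simpa using h
  refine eq_top_of_transvection_mem_of_signedPerm_mem M hM fun σ s => ?_
  have h := M.mul_mem (hswap σ) (signedPerm_one_mem hinv s)
  rw [signedPerm_mul] at h
  simpa using h

end NormalSubgroup

section Determinant

variable {n : ℕ}

lemma coe_detρ (f : FrAut n) : ((detρ n f : ℤˣ) : ℤ) = (mat f).det := rfl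

lemma expSum_of (i k : Fin n) :
    (expSum i (FreeGroup.of k)).toAdd = if k = i then 1 else 0 := by
  simp [expSum]

lemma detρ_inversion (i : Fin n) : detρ n (inversion i) = -1 := by
  apply Units.ext
  have hmat : mat (inversion i) = Matrix.diagonal fun k => if k = i then -1 else 1 := by
    ext k l
    rw [mat, Matrix.of_apply, inversion, signedPerm_of, Equiv.Perm.one_apply]
    by_cases hl : l = i
    · subst hl
      simp [letter_false, expSum_of, Matrix.diagonal_apply]
      grind
    · simp [letter_true, expSum_of, Matrix.diagonal_apply, hl]
      grind
  rw [coe_detρ, hmat, Matrix.det_diagonal]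
  simp

lemma detρ_left_multiplication {i j : Fin n} (hij : i ≠ j) {L : FrAut n}
    (hi : L (FreeGroup.of i) = FreeGroup.of j * FreeGroup.of i)
    (hk : ∀ k, k ≠ i → L (FreeGroup.of k) = FreeGroup.of k) : detρ n L = 1 := by
  apply Units.ext
  have hmat : mat L = Matrix.transvection j i 1 := by
    ext k l
    rw [mat, Matrix.of_apply, Matrix.transvection, Matrix.add_apply, Matrix.one_apply,
      Matrix.single_apply]
    by_cases hl : l = i
    · subst hl
      rw [hi, map_mul, toAdd_mul, expSum_of, expSum_of]
      grind
    · rw [hk l hl, expSum_of]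
      grind
  rw [coe_detρ, hmat, Matrix.det_transvection_of_ne _ _ hij.symm]
  rfl

end Determinant

/-- The normal closure of a left multiplication contains the special automorphism group. -/
lemma SAut_le_normalClosure_left_multiplication {n : ℕ} {i j : Fin n} (hij : i ≠ j) {L : FrAut n}
    (hi : L (FreeGroup.of i) = FreeGroup.of j * FreeGroup.of i)
    (hk : ∀ k, k ≠ i → L (FreeGroup.of k) = FreeGroup.of k) :
    SAut n ≤ Subgroup.normalClosure {L} := by
  set M := Subgroup.normalClosure {L}
  have hL : L = transvection (i, false) (j, false) hij := by
    refine FrAut.ext_of_letter (i, false) ?_ fun k hk' => ?_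
    · rw [transvection_letter, letter_false, letter_false, map_inv, hi, _root_.mul_inv_rev]
    · rw [hk k hk', transvection_of hij hk']
  have hLM : L ∈ M := Subgroup.subset_normalClosure rfl
  have htrans : ∀ a b hab, transvection a b hab ∈ M :=
    transvection_mem_of_normal M (hL ▸ hLM)
  have hMS : M ≤ SAut n := by
    have : (SAut n).Normal := MonoidHom.normal_ker _
    refine Subgroup.normalClosure_le_normal (Set.singleton_subset_iff.2 ?_)
    exact detρ_left_multiplication hij hi hk
  have htop : M ⊔ Subgroup.zpowers (inversion i) = ⊤ :=
    eq_top_of_transvection_mem_of_inversion_mem (i := i)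
      (fun a b hab => Subgroup.mem_sup_left (htrans a b hab))
      (Subgroup.mem_sup_right (Subgroup.mem_zpowers _))
  intro g hg
  have hg' : g ∈ M ⊔ Subgroup.zpowers (inversion i) := htop ▸ Subgroup.mem_top g
  obtain ⟨m, hm, z, ⟨k, rfl⟩, rfl⟩ := Subgroup.mem_sup_of_normal_left.1 hg'
  have hdet : detρ n (inversion i ^ k) = 1 :=
    ((SAut n).mul_mem_cancel_left (hMS hm)).1 hg
  rw [map_zpow, detρ_inversion] at hdet
  have hsq : inversion i ^ (2 : ℤ) = 1 := by
    rw [zpow_ofNat, pow_two, inversion_mul_self]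
  rcases Int.even_or_odd' k with ⟨c, rfl | rfl⟩
  · simpa [_root_.zpow_mul, hsq] using hm
  · rw [_root_.zpow_add, _root_.zpow_mul] at hdet
    simp at hdet

/-- **Lemma 3.3.** For `n ≥ 3` and `f ∈ Aut(F_n)`, if some left multiplication `L_{x_i x_j}`
(with `i ≠ j`) lies in the normal closure `N(f)`, then `N(f) = SAut(F_n)` if `det f̄ = 1`
and `N(f) = Aut(F_n)` if `det f̄ = -1`. -/
theorem normalClosure_of_left_multiplication_aut (n : ℕ) (hn : 3 ≤ n) (f : FrAut n)
    (h : ∃ i j : Fin n, i ≠ j ∧ ∃ L : FrAut n,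
      L (FreeGroup.of i) = FreeGroup.of j * FreeGroup.of i ∧
      (∀ k, k ≠ i → L (FreeGroup.of k) = FreeGroup.of k) ∧
      L ∈ Subgroup.normalClosure {f}) :
    (detρ n f = 1 → Subgroup.normalClosure {f} = SAut n) ∧
    (detρ n f = -1 → Subgroup.normalClosure {f} = ⊤) := by
  obtain ⟨i, j, hij, L, hi, hk, hL⟩ := h
  have hSAut : SAut n ≤ Subgroup.normalClosure {f} :=
    (SAut_le_normalClosure_left_multiplication hij hi hk).trans
      (Subgroup.normalClosure_le_normal (Set.singleton_subset_iff.2 hL))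
  have hf : f ∈ Subgroup.normalClosure {f} := Subgroup.subset_normalClosure rfl
  refine ⟨fun hdet => le_antisymm ?_ hSAut, fun hdet => ?_⟩
  · have : (SAut n).Normal := MonoidHom.normal_ker _
    exact Subgroup.normalClosure_le_normal (Set.singleton_subset_iff.2 hdet)
  · refine (Subgroup.eq_top_iff' _).2 fun g => ?_
    rcases Int.units_eq_one_or (detρ n g) with hg | hg
    · exact hSAut hg
    · have hgf : g * f⁻¹ ∈ SAut n := by
        show detρ n (g * f⁻¹) = 1
        rw [map_mul, map_inv, hg, hdet, mul_inv_cancel]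
      exact ((Subgroup.normalClosure {f}).mul_mem_cancel_right (inv_mem hf)).1 (hSAut hgf)

end NormalClosurePaper
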